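/- arXiv:2512.00337 — 2 statements merged into one kernel-verified Lean document; each statement's English description precedes it below -/
import Mathlib

section
/- Let K = ℚ(√d₁, √d₂) be a biquadratic field with d₁, d₂ positive odd squarefree integers. If the ring of integers O_K possesses a Euclidean ideal in the sense of Lenstra, then ω(|Δ_K|) ≤ 4, where Δ_K is the discriminant of K and ω(m) denotes the number of distinct prime divisors of m. -/
open IntermediateField NumberField
noncomputable section
def biquad (d₁ d₂ : ℤ) : IntermediateField ℚ ℂ :=
  IntermediateField.adjoin ℚ {x : ℂ | x ^ 2 = (d₁ : ℂ) ∨ x ^ 2 = (d₂ : ℂ)}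

/-- Lenstra's notion of a Euclidean ideal of a Dedekind domain `R`
(with fraction field `F`). -/
def IsEuclideanIdeal (R : Type*) [CommRing R] [IsDomain R] [IsDedekindDomain R]
    (F : Type*) [Field F] [Algebra R F] [IsFractionRing R F] (C : Ideal R) : Prop :=
  C ≠ 0 ∧
  ∃ (W : Type) (rel : W → W → Prop) (_ : IsWellOrder W rel) (Ψ : Ideal R → W),
    ∀ I : Ideal R, I ≠ 0 →
      ∀ x : F,
        x ∈ (I : FractionalIdeal (nonZeroDivisors R) F)⁻¹ *
            (C : FractionalIdeal (nonZeroDivisors R) F) →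
        x ∉ (C : FractionalIdeal (nonZeroDivisors R) F) →
        ∃ y ∈ C, ∃ J : Ideal R,
          (J : FractionalIdeal (nonZeroDivisors R) F) =
            FractionalIdeal.spanSingleton (nonZeroDivisors R) (x - algebraMap R F y) *
              (I : FractionalIdeal (nonZeroDivisors R) F) *
              (C : FractionalIdeal (nonZeroDivisors R) F)⁻¹ ∧
          rel (Ψ J) (Ψ I)

/-- L1 -/
theorem aux_sq (p : ℕ) [Fact p.Prime] (d n : ℤ) (hd : Squarefree d) (hpd : (p:ℤ) ∣ d) :
    ∀ (N : ℕ) (a b c : ℤ), c.natAbs = N → c ≠ 0 → n * c^2 = a^2 - d * b^2 → IsSquare (n : ZMod p) := by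
  have hp : Prime (p:ℤ) := Nat.prime_iff_prime_int.mp Fact.out
  intro N
  induction N using Nat.strong_induction_on with
  | _ N ih =>
  intro a b c hN hc h
  by_cases hpc : (p:ℤ) ∣ c
  · have ha : (p:ℤ) ∣ a := by
      apply hp.dvd_of_dvd_pow (n := 2)
      have : a^2 = n * c^2 + d * b^2 := by linarith
      rw [this]
      exact dvd_add (Dvd.dvd.mul_left (dvd_pow hpc two_ne_zero) _) (Dvd.dvd.mul_right hpd _)
    obtain ⟨c', rfl⟩ := hpc
    obtain ⟨a', rfl⟩ := ha
    have hb : (p:ℤ) ∣ b := by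
      apply hp.dvd_of_dvd_pow (n := 2)
      obtain ⟨e, rfl⟩ := hpd
      have he : ¬ (p:ℤ) ∣ e := by
        rintro ⟨f, rfl⟩
        exact hp.not_isUnit (hd p ⟨f, by ring⟩)
      have h2 : (p:ℤ) * (e * b^2) = p * (p * (a'^2 - n * c'^2)) := by linear_combination h
      have h3 := mul_left_cancel₀ hp.ne_zero h2
      exact (hp.dvd_or_dvd ⟨_, h3⟩).resolve_left he
    obtain ⟨b', rfl⟩ := hb
    have hc' : c' ≠ 0 := by rintro rfl; simp at hc
    refine ih c'.natAbs ?_ a' b' c' rfl hc' ?_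
    · rw [← hN, Int.natAbs_mul, Int.natAbs_natCast]
      have := (Fact.out : p.Prime).two_le
      have : 0 < c'.natAbs := Int.natAbs_pos.mpr hc'
      nlinarith
    · have h2 : (p:ℤ)^2 * (n * c'^2) = p^2 * (a'^2 - d * b'^2) := by linear_combination h
      exact mul_left_cancel₀ (pow_ne_zero 2 hp.ne_zero) h2
  · have hc0 : (c : ZMod p) ≠ 0 := by
      rwa [Ne, ZMod.intCast_zmod_eq_zero_iff_dvd]
    have hd0 : (d : ZMod p) = 0 := by
      rwa [ZMod.intCast_zmod_eq_zero_iff_dvd]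
    have h' : (n : ZMod p) * c^2 = a^2 - d * b^2 := by exact_mod_cast congrArg (Int.cast : ℤ → ZMod p) h
    refine ⟨a / c, ?_⟩
    field_simp
    rw [h', hd0]; ring

theorem aux_four (d n : ℤ) (hd : d % 4 = 3) (hn : n % 2 = 1) :
    ∀ (N : ℕ) (a b c : ℤ), c.natAbs = N → c ≠ 0 → n * c^2 = a^2 - d * b^2 → n % 4 = 1 := by
  intro N
  induction N using Nat.strong_induction_on with
  | _ N ih =>
  intro a b c hN hc h
  have h4 : (n : ZMod 4) * c^2 = a^2 - d * b^2 := by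
    exact_mod_cast congrArg (Int.cast : ℤ → ZMod 4) h
  have hd4 : (d : ZMod 4) = 3 := by
    have : ((d : ℤ) : ZMod 4) = ((3 : ℤ) : ZMod 4) := by
      rw [ZMod.intCast_eq_intCast_iff]; exact hd
    simpa using this
  have hn4 : (n : ZMod 4) = 1 ∨ (n : ZMod 4) = 3 := by
    have : n % 4 = 1 ∨ n % 4 = 3 := by omega
    rcases this with h | h
    · left
      have : ((n : ℤ) : ZMod 4) = ((1 : ℤ) : ZMod 4) := by
        rw [ZMod.intCast_eq_intCast_iff]; exact h
      simpa using this
    · right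
      have : ((n : ℤ) : ZMod 4) = ((3 : ℤ) : ZMod 4) := by
        rw [ZMod.intCast_eq_intCast_iff]; exact h
      simpa using this
  have key : ∀ x y z m : ZMod 4, (m = 1 ∨ m = 3) → m * z^2 = x^2 - 3 * y^2 →
      m = 1 ∨ (2 * x = 0 ∧ 2 * y = 0 ∧ 2 * z = 0) := by decide
  rw [hd4] at h4
  have tr : ∀ x : ℤ, (2 * (x : ZMod 4)) = 0 → ∃ x', x = 2 * x' := by
    intro x hx
    have : ((2 * x : ℤ) : ZMod 4) = 0 := by push_cast; exact hx
    rw [ZMod.intCast_zmod_eq_zero_iff_dvd] at this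
    obtain ⟨t, ht⟩ := this
    exact ⟨t, by push_cast at ht; omega⟩
  rcases key _ _ _ _ hn4 h4 with h1 | ⟨hx, hy, hz⟩
  · have : ((n : ℤ) : ZMod 4) = ((1 : ℤ) : ZMod 4) := by simpa using h1
    rw [ZMod.intCast_eq_intCast_iff] at this
    exact this
  · obtain ⟨a', rfl⟩ := tr _ hx
    obtain ⟨b', rfl⟩ := tr _ hy
    obtain ⟨c', rfl⟩ := tr _ hz
    exact ih c'.natAbs (by omega) a' b' c' rfl (by rintro rfl; simp at hc) (by linarith)

theorem rat_clear (A B C : ℚ) (hC : C ≠ 0) (n d : ℤ) (h : n * C^2 = A^2 - d * B^2) :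
    ∃ a b c : ℤ, c ≠ 0 ∧ n * c^2 = a^2 - d * b^2 := by
  refine ⟨A.num * B.den * C.den, B.num * A.den * C.den, C.num * A.den * B.den, ?_, ?_⟩
  · simp [hC]
  · have hA := Rat.num_div_den A
    have hB := Rat.num_div_den B
    have hC := Rat.num_div_den C
    have h1 : (A.den:ℚ) ≠ 0 := by simp
    have h2 : (B.den:ℚ) ≠ 0 := by simp
    have h3 : (C.den:ℚ) ≠ 0 := by simp
    rw [← hA, ← hB, ← hC] at h
    field_simp at h
    have : ((n * (C.num * A.den * B.den)^2 : ℤ):ℚ) = ((A.num * B.den * C.den)^2 - d * (B.num * A.den * C.den)^2 : ℤ) := by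
      push_cast
      linear_combination h
    exact_mod_cast this

section
variable {K : Type*} [Field K] [NumberField K]

theorem repr_aux (b : Module.Basis (Fin 4) ℚ K) (x y z w : ℚ) :
    b.repr (x • b 0 + y • b 1 + z • b 2 + w • b 3) = ![x, y, z, w] := by
  ext i
  fin_cases i <;> simp

theorem lmm_aux (b : Module.Basis (Fin 4) ℚ K) (s₁ s₂ : K) (d₁ d₂ : ℚ)
    (hb : ⇑b = ![1, s₁, s₂, s₁ * s₂]) (h₁ : s₁ ^ 2 = (d₁ : K)) (h₂ : s₂ ^ 2 = (d₂ : K))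
    (x y z w : ℚ) :
    Algebra.leftMulMatrix b ((x : K) + y * s₁ + z * s₂ + w * (s₁ * s₂)) =
      !![x, d₁ * y, d₂ * z, d₁ * d₂ * w;
         y, x, d₂ * w, d₂ * z;
         z, d₁ * w, x, d₁ * y;
         w, z, y, x] := by
  have h : ∀ (j : Fin 4) (x' y' z' w' : ℚ), ((x : K) + y * s₁ + z * s₂ + w * (s₁ * s₂)) * b j =
      (x' : K) + y' * s₁ + z' * s₂ + w' * (s₁ * s₂) →
      ∀ i, Algebra.leftMulMatrix b ((x : K) + y * s₁ + z * s₂ + w * (s₁ * s₂)) i j = ![x', y', z', w'] i := by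
    intro j x' y' z' w' h i
    rw [Algebra.leftMulMatrix_eq_repr_mul, h, ← repr_aux b, hb]
    simp [Rat.smul_def]
  have h0 := h 0 x y z w (by rw [hb]; simp)
  have h1 := h 1 (d₁ * y) x (d₁ * w) z (by
    rw [hb]; simp; linear_combination (y + w * s₂) * h₁)
  have h2 := h 2 (d₂ * z) (d₂ * w) x y (by
    rw [hb]; simp; linear_combination (z + w * s₁) * h₂)
  have h3 := h 3 (d₁ * d₂ * w) (d₂ * z) (d₁ * y) x (by
    rw [hb]; simp
    linear_combination (y * s₂ + w * s₂ ^ 2) * h₁ + (z * s₁ + w * d₁) * h₂)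
  ext i j
  fin_cases j
  · exact (h0 i).trans (by fin_cases i <;> rfl)
  · exact (h1 i).trans (by fin_cases i <;> rfl)
  · exact (h2 i).trans (by fin_cases i <;> rfl)
  · exact (h3 i).trans (by fin_cases i <;> rfl)

theorem norm_aux (b : Module.Basis (Fin 4) ℚ K) (s₁ s₂ : K) (d₁ d₂ : ℚ)
    (hb : ⇑b = ![1, s₁, s₂, s₁ * s₂]) (h₁ : s₁ ^ 2 = (d₁ : K)) (h₂ : s₂ ^ 2 = (d₂ : K))
    (x y z w : ℚ) :
    Algebra.norm ℚ ((x : K) + y * s₁ + z * s₂ + w * (s₁ * s₂)) =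
      (x^2+d₁*y^2-d₂*(z^2+d₁*w^2))^2 - d₁ * (2*x*y-2*d₂*z*w)^2 := by
  rw [Algebra.norm_eq_matrix_det b, lmm_aux b s₁ s₂ d₁ d₂ hb h₁ h₂]
  simp [Matrix.det_succ_row_zero, Fin.sum_univ_succ, Fin.succAbove]
  ring

theorem trace_aux (b : Module.Basis (Fin 4) ℚ K) (s₁ s₂ : K) (d₁ d₂ : ℚ)
    (hb : ⇑b = ![1, s₁, s₂, s₁ * s₂]) (h₁ : s₁ ^ 2 = (d₁ : K)) (h₂ : s₂ ^ 2 = (d₂ : K))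
    (x y z w : ℚ) :
    Algebra.trace ℚ K ((x : K) + y * s₁ + z * s₂ + w * (s₁ * s₂)) = 4 * x := by
  rw [Algebra.trace_eq_matrix_trace b, lmm_aux b s₁ s₂ d₁ d₂ hb h₁ h₂]
  simp [Matrix.trace, Fin.sum_univ_succ]
  ring

theorem exists_coord (b : Module.Basis (Fin 4) ℚ K) (s₁ s₂ : K)
    (hb : ⇑b = ![1, s₁, s₂, s₁ * s₂]) (α : K) :
    ∃ x y z w : ℚ, α = (x : K) + y * s₁ + z * s₂ + w * (s₁ * s₂) := by
  refine ⟨b.repr α 0, b.repr α 1, b.repr α 2, b.repr α 3, ?_⟩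
  conv_lhs => rw [← b.sum_repr α]
  rw [Fin.sum_univ_four, hb]
  simp [Rat.smul_def]

theorem norm_form (b : Module.Basis (Fin 4) ℚ K) (s₁ s₂ : K) (d₁ d₂ : ℚ)
    (hb : ⇑b = ![1, s₁, s₂, s₁ * s₂]) (h₁ : s₁ ^ 2 = (d₁ : K)) (h₂ : s₂ ^ 2 = (d₂ : K))
    (α : K) : (∃ A B : ℚ, Algebra.norm ℚ α = A ^ 2 - d₁ * B ^ 2) ∧
      (∃ A B : ℚ, Algebra.norm ℚ α = A ^ 2 - d₂ * B ^ 2) := by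
  obtain ⟨x, y, z, w, rfl⟩ := exists_coord b s₁ s₂ hb α
  rw [norm_aux b s₁ s₂ d₁ d₂ hb h₁ h₂]
  exact ⟨⟨_, _, rfl⟩, x^2+d₂*z^2-d₁*(y^2+d₂*w^2), 2*x*z-2*d₁*y*w, by ring⟩

theorem discr_aux (b : Module.Basis (Fin 4) ℚ K) (s₁ s₂ : K) (d₁ d₂ : ℚ)
    (hb : ⇑b = ![1, s₁, s₂, s₁ * s₂]) (h₁ : s₁ ^ 2 = (d₁ : K)) (h₂ : s₂ ^ 2 = (d₂ : K)) :
    Algebra.discr ℚ b = 256 * d₁ ^ 2 * d₂ ^ 2 := by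
  have t : ∀ (a : K) (x y z w : ℚ), a = (x : K) + y * s₁ + z * s₂ + w * (s₁ * s₂) →
      Algebra.trace ℚ K a = 4 * x := by
    rintro _ x y z w rfl
    exact trace_aux b s₁ s₂ d₁ d₂ hb h₁ h₂ x y z w
  have : Algebra.traceMatrix ℚ b = Matrix.diagonal ![4, 4 * d₁, 4 * d₂, 4 * (d₁ * d₂)] := by
    ext i j
    rw [Algebra.traceMatrix_apply, Algebra.traceForm_apply, hb]
    fin_cases i <;> fin_cases j <;> simp
    · simpa using t 1 1 0 0 0 (by simp)
    · simpa using t s₁ 0 1 0 0 (by simp)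
    · simpa using t s₂ 0 0 1 0 (by simp)
    · simpa using t (s₁ * s₂) 0 0 0 1 (by simp)
    · simpa using t s₁ 0 1 0 0 (by simp)
    · simpa using t (s₁ * s₁) d₁ 0 0 0 (by simp; linear_combination h₁)
    · simpa using t (s₁ * s₂) 0 0 0 1 (by simp)
    · simpa using t (s₁ * (s₁ * s₂)) 0 0 d₁ 0 (by simp; linear_combination s₂ * h₁)
    · simpa using t s₂ 0 0 1 0 (by simp)
    · simpa using t (s₂ * s₁) 0 0 0 1 (by simp; ring)
    · simpa using t (s₂ * s₂) d₂ 0 0 0 (by simp; linear_combination h₂)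
    · simpa using t (s₂ * (s₁ * s₂)) 0 d₂ 0 0 (by simp; linear_combination s₁ * h₂)
    · simpa using t (s₁ * s₂) 0 0 0 1 (by simp)
    · simpa using t (s₁ * s₂ * s₁) 0 0 d₁ 0 (by simp; linear_combination s₂ * h₁)
    · simpa using t (s₁ * s₂ * s₂) 0 d₂ 0 0 (by simp; linear_combination s₁ * h₂)
    · simpa using t (s₁ * s₂ * (s₁ * s₂)) (d₁ * d₂) 0 0 0 (by
        simp; linear_combination s₂ ^ 2 * h₁ + d₁ * h₂)
  rw [Algebra.discr_def, this, Matrix.det_diagonal]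
  simp [Fin.prod_univ_succ]
  ring

theorem discr_dvd_aux (h4 : Module.finrank ℚ K = 4) (f : Fin 4 → 𝓞 K) :
    ∃ k : ℤ, Algebra.discr ℚ (fun i => (f i : K)) = k ^ 2 * (discr K : ℤ) := by
  let B : Module.Basis (Fin 4) ℤ (𝓞 K) := Module.finBasisOfFinrankEq ℤ (𝓞 K) (by
    rw [RingOfIntegers.rank, h4])
  refine ⟨(B.toMatrix f).transpose.det, ?_⟩
  have h1 : Algebra.discr ℤ f = (B.toMatrix f).transpose.det ^ 2 * Algebra.discr ℤ B := by
    rw [← Algebra.discr_of_matrix_mulVec]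
    congr 1
    ext1 j
    conv_lhs => rw [← B.sum_toMatrix_smul_self f j]
    simp [Matrix.mulVec, dotProduct]
  rw [discr_eq_discr] at h1
  have h2 : (Algebra.discr ℤ f : ℚ) = Algebra.discr ℚ (fun i => (f i : K)) := by
    rw [Algebra.discr_def, Algebra.discr_def]
    rw [← eq_intCast (Int.castRingHom ℚ), RingHom.map_det]
    congr 1
    ext i j
    simp [Algebra.traceMatrix_apply, Algebra.traceForm_apply]
    rw [Algebra.coe_trace_int]; simp
  rw [← h2, h1]
  push_cast; ring
end

section
variable {K : Type*} [Field K] [NumberField K]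

theorem int_of_sq (s : K) (d : ℤ) (h : s ^ 2 = (d : K)) : IsIntegral ℤ s := by
  refine ⟨Polynomial.X ^ 2 - Polynomial.C d, Polynomial.monic_X_pow_sub_C d two_ne_zero, ?_⟩
  simp [h, -eq_intCast, Polynomial.eval₂_sub]

theorem int_half (s : K) (d : ℤ) (h : s ^ 2 = (d : K)) (hd : d % 4 = 1) :
    IsIntegral ℤ ((1 + s) / 2) := by
  obtain ⟨e, rfl⟩ : ∃ e, d = 4 * e + 1 := ⟨d / 4, by omega⟩
  refine ⟨Polynomial.X ^ 2 - (Polynomial.X + Polynomial.C e), ?_, ?_⟩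
  · apply Polynomial.monic_X_pow_sub
    rw [Polynomial.degree_X_add_C e]; norm_num
  · simp [-eq_intCast, Polynomial.eval₂_sub]
    push_cast at h
    field_simp
    linear_combination h

theorem discr_primes (b : Module.Basis (Fin 4) ℚ K) (s₁ s₂ : K) (d₁ d₂ : ℤ)
    (hb : ⇑b = ![1, s₁, s₂, s₁ * s₂]) (h₁ : s₁ ^ 2 = (d₁ : K)) (h₂ : s₂ ^ 2 = (d₂ : K))
    (p : ℕ) (hp : p.Prime) (hpd : (p : ℤ) ∣ discr K) :
    (p : ℤ) ∣ d₁ ∨ (p : ℤ) ∣ d₂ ∨ (p = 2 ∧ ¬ (d₁ % 4 = 1 ∧ d₂ % 4 = 1)) := by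
  have h4 : Module.finrank ℚ K = 4 := by simpa using Module.finrank_eq_card_basis b
  have hp' : Prime (p : ℤ) := Nat.prime_iff_prime_int.mp hp
  have hD := discr_aux b s₁ s₂ d₁ d₂ hb (by simpa using h₁) (by simpa using h₂)
  by_cases hc : d₁ % 4 = 1 ∧ d₂ % 4 = 1
  · let u₁ : 𝓞 K := ⟨_, int_half s₁ d₁ h₁ hc.1⟩
    let u₂ : 𝓞 K := ⟨_, int_half s₂ d₂ h₂ hc.2⟩
    obtain ⟨k, hk⟩ := discr_dvd_aux h4 ![1, u₁, u₂, u₁ * u₂]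
    let P : Matrix (Fin 4) (Fin 4) ℚ := !![1,0,0,0; 1/2,1/2,0,0; 1/2,0,1/2,0; 1/4,1/4,1/4,1/4]
    have hP : P.det = 1 / 16 := by
      simp [P, Matrix.det_succ_row_zero, Fin.sum_univ_succ, Fin.succAbove]
      norm_num
    have hf : (fun i => ((![1, u₁, u₂, u₁ * u₂] : Fin 4 → 𝓞 K) i : K)) =
        (P.map (algebraMap ℚ K)).mulVec b := by
      have e₁ : (u₁ : K) = (1 + s₁) / 2 := rfl
      have e₂ : (u₂ : K) = (1 + s₂) / 2 := rfl
      rw [hb]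
      ext i
      fin_cases i <;> simp [P, Matrix.mulVec, dotProduct, Fin.sum_univ_succ, e₁, e₂] <;> ring
    rw [hf, Algebra.discr_of_matrix_mulVec, hP, hD] at hk
    have hk' : d₁ ^ 2 * d₂ ^ 2 = k ^ 2 * discr K := by
      have : ((d₁ ^ 2 * d₂ ^ 2 : ℤ) : ℚ) = (k ^ 2 * discr K : ℤ) := by
        push_cast; linear_combination hk
      exact_mod_cast this
    have : (p : ℤ) ∣ d₁ ^ 2 * d₂ ^ 2 := hk' ▸ Dvd.dvd.mul_left hpd _
    rcases hp'.dvd_or_dvd this with h | h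
    · exact Or.inl (hp'.dvd_of_dvd_pow h)
    · exact Or.inr (Or.inl (hp'.dvd_of_dvd_pow h))
  · let u₁ : 𝓞 K := ⟨_, int_of_sq s₁ d₁ h₁⟩
    let u₂ : 𝓞 K := ⟨_, int_of_sq s₂ d₂ h₂⟩
    obtain ⟨k, hk⟩ := discr_dvd_aux h4 ![1, u₁, u₂, u₁ * u₂]
    have hf : (fun i => ((![1, u₁, u₂, u₁ * u₂] : Fin 4 → 𝓞 K) i : K)) = b := by
      have e₁ : (u₁ : K) = s₁ := rfl
      have e₂ : (u₂ : K) = s₂ := rfl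
      rw [hb]
      ext i
      fin_cases i <;> simp [e₁, e₂]
    rw [hf, hD] at hk
    have hk' : 2 ^ 8 * (d₁ ^ 2 * d₂ ^ 2) = k ^ 2 * discr K := by
      have : ((2 ^ 8 * (d₁ ^ 2 * d₂ ^ 2) : ℤ) : ℚ) = (k ^ 2 * discr K : ℤ) := by
        push_cast; linear_combination hk
      exact_mod_cast this
    have : (p : ℤ) ∣ 2 ^ 8 * (d₁ ^ 2 * d₂ ^ 2) := hk' ▸ Dvd.dvd.mul_left hpd _
    rcases hp'.dvd_or_dvd this with h | h
    · have := hp'.dvd_of_dvd_pow h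
      refine Or.inr (Or.inr ⟨?_, hc⟩)
      exact (Nat.prime_dvd_prime_iff_eq hp Nat.prime_two).mp (by exact_mod_cast this)
    · rcases hp'.dvd_or_dvd h with h | h
      · exact Or.inl (hp'.dvd_of_dvd_pow h)
      · exact Or.inr (Or.inl (hp'.dvd_of_dvd_pow h))

theorem int_coord (b : Module.Basis (Fin 4) ℚ K) (s₁ s₂ : K) (d₁ d₂ : ℤ)
    (hb : ⇑b = ![1, s₁, s₂, s₁ * s₂]) (h₁ : s₁ ^ 2 = (d₁ : K)) (h₂ : s₂ ^ 2 = (d₂ : K))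
    (θ : K) (hθ : IsIntegral ℤ θ) :
    ∃ x y z w : ℤ, (4 * d₁ * d₂ : K) * θ = (x : K) + y * s₁ + z * s₂ + w * (s₁ * s₂) := by
  have i₁ := int_of_sq s₁ d₁ h₁
  have i₂ := int_of_sq s₂ d₂ h₂
  obtain ⟨x, y, z, w, rfl⟩ := exists_coord b s₁ s₂ hb θ
  have t : ∀ (a : K) (x y z w : ℚ), a = (x : K) + y * s₁ + z * s₂ + w * (s₁ * s₂) →
      IsIntegral ℤ a → ∃ n : ℤ, (n : ℚ) = 4 * x := by
    rintro _ x y z w rfl h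
    have := trace_aux b s₁ s₂ d₁ d₂ hb (by simpa using h₁) (by simpa using h₂) x y z w
    rw [← this]
    have h5 := Algebra.isIntegral_trace (L := ℚ) (F := K) h
    obtain ⟨n, hn⟩ := IsIntegrallyClosed.isIntegral_iff.mp h5
    exact ⟨n, by simpa using hn⟩
  obtain ⟨n1, hn1⟩ := t _ x y z w rfl hθ
  obtain ⟨n2, hn2⟩ := t _ (y * d₁) x (w * d₁) z (by
    push_cast; linear_combination (y + w * s₂) * h₁) (hθ.mul i₁)
  obtain ⟨n3, hn3⟩ := t _ (z * d₂) (w * d₂) x y (by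
    push_cast; linear_combination (z + w * s₁) * h₂) (hθ.mul i₂)
  obtain ⟨n4, hn4⟩ := t _ (w * d₁ * d₂) (z * d₂) (y * d₁) x (by
    push_cast; linear_combination (y * s₂ + w * s₂ ^ 2) * h₁ + (z * s₁ + w * d₁) * h₂)
    (hθ.mul (i₁.mul i₂))
  refine ⟨n1 * d₁ * d₂, n2 * d₂, n3 * d₁, n4, ?_⟩
  have hn1 : (n1 : K) = 4 * x := by exact_mod_cast congrArg (Rat.cast : ℚ → K) hn1
  have hn2 : (n2 : K) = 4 * (y * d₁) := by exact_mod_cast congrArg (Rat.cast : ℚ → K) hn2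
  have hn3 : (n3 : K) = 4 * (z * d₂) := by exact_mod_cast congrArg (Rat.cast : ℚ → K) hn3
  have hn4 : (n4 : K) = 4 * (w * d₁ * d₂) := by exact_mod_cast congrArg (Rat.cast : ℚ → K) hn4
  push_cast
  rw [hn1, hn2, hn3, hn4]; ring

theorem exists_ideal_norm (b : Module.Basis (Fin 4) ℚ K) (s₁ s₂ : K) (d₁ d₂ : ℤ)
    (hb : ⇑b = ![1, s₁, s₂, s₁ * s₂]) (h₁ : s₁ ^ 2 = (d₁ : K)) (h₂ : s₂ ^ 2 = (d₂ : K))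
    (l : ℕ) [hl : Fact l.Prime] (hl2 : (4 * d₁ * d₂ : ZMod l) ≠ 0)
    (hs₁ : IsSquare (d₁ : ZMod l)) (hs₂ : IsSquare (d₂ : ZMod l)) :
    ∃ I : Ideal (𝓞 K), Ideal.absNorm I = l := by
  have hnu : ¬ IsUnit (l : 𝓞 K) := by
    intro h
    rw [NumberField.isUnit_iff_norm] at h
    have h3 : Algebra.norm ℚ ((l : ℚ) : K) = (l : ℚ) ^ 4 := by
      rw [← eq_ratCast (algebraMap ℚ K), Algebra.norm_algebraMap, Module.finrank_eq_card_basis b]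
      simp
    have h5 : ((RingOfIntegers.norm ℚ (l : 𝓞 K) : 𝓞 ℚ) : ℚ) = (l:ℚ)^4 := by
      rw [RingOfIntegers.coe_norm, ← h3]; simp
    rw [h5] at h
    have := hl.out.two_le
    have h6 : (l:ℚ)^4 = 1 := by rwa [abs_of_nonneg (by positivity)] at h
    have h7 : l ^ 4 = 1 := by exact_mod_cast h6
    have h8 : l = 1 := by simpa using h7
    omega
  obtain ⟨P, hP, hlP⟩ := exists_max_ideal_of_mem_nonunits hnu
  refine ⟨P, ?_⟩
  let k := 𝓞 K ⧸ P
  let _ : Field k := Ideal.Quotient.field P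
  have hl0 : (l : k) = 0 := by
    have := Ideal.Quotient.eq_zero_iff_mem.mpr hlP
    simpa using this
  have : CharP k l := by
    have h1 := ringChar.spec k l
    have h2 : ringChar k ∣ l := h1.mp hl0
    have h3 : ringChar k = l := ((Nat.dvd_prime hl.out).mp h2).resolve_left (CharP.ringChar_ne_one)
    rw [← h3]; exact ringChar.charP k
  let φ : ZMod l →+* k := ZMod.castHom (dvd_refl l) k
  have hφi : ∀ n : ℤ, φ n = n := fun n => map_intCast φ n
  obtain ⟨u₁, e₁⟩ : ∃ u : 𝓞 K, (u : K) = s₁ := ⟨⟨_, int_of_sq s₁ d₁ h₁⟩, rfl⟩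
  obtain ⟨u₂, e₂⟩ : ∃ u : 𝓞 K, (u : K) = s₂ := ⟨⟨_, int_of_sq s₂ d₂ h₂⟩, rfl⟩
  let q : 𝓞 K →+* k := Ideal.Quotient.mk P
  have key : ∀ (u : 𝓞 K) (d : ℤ), u ^ 2 = d → IsSquare (d : ZMod l) → q u ∈ φ.range := by
    intro u d hu ⟨r, hr⟩
    have : q u ^ 2 = φ r ^ 2 := by
      rw [← map_pow, hu, ← map_pow, pow_two, ← hr]
      simp
    rcases sq_eq_sq_iff_eq_or_eq_neg.mp this with h | h
    · exact ⟨r, h.symm⟩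
    · exact ⟨-r, by rw [h, map_neg]⟩
  have k₁ := key u₁ d₁ (by ext; simpa [e₁] using h₁) hs₁
  have k₂ := key u₂ d₂ (by ext; simpa [e₂] using h₂) hs₂
  have hsurj : Function.Surjective φ := by
    intro y
    obtain ⟨θ, rfl⟩ := Ideal.Quotient.mk_surjective y
    obtain ⟨x, y, z, w, h⟩ := int_coord b s₁ s₂ d₁ d₂ hb h₁ h₂ θ θ.2
    have h' : (4 * d₁ * d₂ : 𝓞 K) * θ = (x : 𝓞 K) + y * u₁ + z * u₂ + w * (u₁ * u₂) := by
      ext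
      rw [← e₁, ← e₂] at h
      simp only [map_add, map_mul, map_intCast, map_ofNat]
      exact h
    have h'' : φ (4 * d₁ * d₂) * q θ ∈ φ.range := by
      have : φ (4 * d₁ * d₂) * q θ = q ((4 * d₁ * d₂ : 𝓞 K) * θ) := by
        have e4 : φ 4 = q 4 := by rw [map_ofNat, map_ofNat]
        simp [e4]
      rw [this, h']
      simp only [map_add, map_mul, map_intCast]
      have hi : ∀ n : ℤ, (n : k) ∈ φ.range := fun n => ⟨n, hφi n⟩
      exact add_mem (add_mem (add_mem (hi _) (mul_mem (hi _) k₁)) (mul_mem (hi _) k₂))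
        (mul_mem (hi _) (mul_mem k₁ k₂))
    obtain ⟨t, ht⟩ := h''
    have hm : φ (4 * d₁ * d₂) ≠ 0 := (map_ne_zero φ).mpr hl2
    refine ⟨t / (4 * d₁ * d₂), ?_⟩
    rw [map_div₀, ht]
    exact mul_div_cancel_left₀ _ hm
  rw [Ideal.absNorm_apply, Submodule.cardQuot_apply]
  have := Nat.card_congr (Equiv.ofBijective φ ⟨φ.injective, hsurj⟩)
  rw [Nat.card_zmod] at this
  exact this.symm

theorem euclid_norm (C : Ideal (𝓞 K)) (hE : IsEuclideanIdeal (𝓞 K) K C) (I : Ideal (𝓞 K))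
    (hI : I ≠ 0) : ∃ (k : ℕ) (ε : ℤˣ) (α : K) (q : ℚ), α ≠ 0 ∧ q ≠ 0 ∧
      (Ideal.absNorm I : ℚ) = (ε : ℤ) * (Ideal.absNorm C : ℚ) ^ k * Algebra.norm ℚ α * q ^ 2 := by
  obtain ⟨hC, W, rel, hW, Ψ, hΨ⟩ := hE
  have hwf : WellFounded (fun I J : Ideal (𝓞 K) => rel (Ψ I) (Ψ J)) :=
    InvImage.wf Ψ hW.toIsWellFounded.wf
  induction I using hwf.induction with
  | _ I ih =>
  have hI' : (I : FractionalIdeal (nonZeroDivisors (𝓞 K)) K) ≠ 0 := by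
    rwa [Ne, FractionalIdeal.coeIdeal_eq_zero]
  have hC' : (C : FractionalIdeal (nonZeroDivisors (𝓞 K)) K) ≠ 0 := by
    rwa [Ne, FractionalIdeal.coeIdeal_eq_zero]
  by_cases hle : (I : FractionalIdeal (nonZeroDivisors (𝓞 K)) K)⁻¹ * C ≤ C
  · have h1 : (1 : FractionalIdeal (nonZeroDivisors (𝓞 K)) K) ≤ I := by
      have h : ((I : FractionalIdeal (nonZeroDivisors (𝓞 K)) K)⁻¹ * C) *
          ((C : FractionalIdeal (nonZeroDivisors (𝓞 K)) K)⁻¹ * I) ≤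
          C * ((C : FractionalIdeal (nonZeroDivisors (𝓞 K)) K)⁻¹ * I) := by gcongr
      have e1 : ((I : FractionalIdeal (nonZeroDivisors (𝓞 K)) K)⁻¹ * C) * ((C : FractionalIdeal (nonZeroDivisors (𝓞 K)) K)⁻¹ * I) = 1 := by
        field_simp
      have e2 : (C : FractionalIdeal (nonZeroDivisors (𝓞 K)) K) * ((C : FractionalIdeal (nonZeroDivisors (𝓞 K)) K)⁻¹ * I) = I := by
        field_simp
      simpa only [e1, e2] using h
    have h2 : I = ⊤ := by
      rw [← FractionalIdeal.coeIdeal_top, FractionalIdeal.coeIdeal_le_coeIdeal] at h1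
      exact top_le_iff.mp h1
    refine ⟨0, 1, 1, 1, one_ne_zero, one_ne_zero, ?_⟩
    simp [h2]
  · obtain ⟨x, hx, hxC⟩ := SetLike.not_le_iff_exists.mp hle
    obtain ⟨y, hy, J, hJ, hlt⟩ := hΨ I hI x hx hxC
    set z := x - algebraMap (𝓞 K) K y with hz
    have hz0 : z ≠ 0 := by
      intro h
      apply hxC
      rw [sub_eq_zero.mp (hz.symm.trans h)]
      exact FractionalIdeal.mem_coeIdeal_of_mem _ hy
    have hJ0 : J ≠ 0 := by
      intro h0
      have h1 : (J : FractionalIdeal (nonZeroDivisors (𝓞 K)) K) = 0 := by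
        rwa [FractionalIdeal.coeIdeal_eq_zero]
      rw [hJ] at h1
      refine mul_ne_zero (mul_ne_zero ?_ hI') (inv_ne_zero hC') h1
      rwa [Ne, FractionalIdeal.spanSingleton_eq_zero_iff]
    obtain ⟨k, ε, α, q, hα, hq, h⟩ := ih J hlt hJ0
    have hN := congrArg FractionalIdeal.absNorm hJ
    rw [map_mul, map_mul, map_inv₀, FractionalIdeal.absNorm_span_singleton,
      FractionalIdeal.coeIdeal_absNorm, FractionalIdeal.coeIdeal_absNorm,
      FractionalIdeal.coeIdeal_absNorm] at hN
    have hNC : (Ideal.absNorm C : ℚ) ≠ 0 := by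
      exact_mod_cast (Ideal.absNorm_ne_zero_iff_mem_nonZeroDivisors.mpr
        (mem_nonZeroDivisors_of_ne_zero hC))
    have hNz : Algebra.norm ℚ z ≠ 0 := by
      rwa [Ne, Algebra.norm_eq_zero_iff]
    rw [h] at hN
    obtain ⟨η, hη⟩ : ∃ η : ℤˣ, |Algebra.norm ℚ z| = (η : ℤ) * Algebra.norm ℚ z := by
      rcases abs_choice (Algebra.norm ℚ z) with h | h
      · exact ⟨1, by simp [h]⟩
      · exact ⟨-1, by simp [h]⟩
    have hηη : ((η : ℤ) : ℚ) * (η : ℤ) = 1 := by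
      exact_mod_cast Int.isUnit_mul_self η.isUnit
    refine ⟨k + 1, η * ε, α / z, q, div_ne_zero hα hz0, hq, ?_⟩
    rw [hη] at hN
    have hdiv : Algebra.norm ℚ (α / z) = Algebra.norm ℚ α / Algebra.norm ℚ z := by
      rw [eq_div_iff hNz, ← map_mul, div_mul_cancel₀ _ hz0]
    rw [hdiv]
    field_simp at hN ⊢
    push_cast
    linear_combination (-η : ℚ) * hN - (Ideal.absNorm I : ℚ) * Algebra.norm ℚ z * hηη
end

theorem recip_aux (d l : ℕ) (hd : Odd d) (hsf : Squarefree d) (hl : l.Prime) (hl2 : Odd l) :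
    jacobiSym d l = (if d % 4 = 3 then ZMod.χ₄ (l : ZMod 4) else 1) * ∏ p ∈ d.primeFactors, jacobiSym l p := by
  rw [jacobiSym.quadratic_reciprocity' hd hl2]
  have h1 : jacobiSym l d = ∏ p ∈ d.primeFactors, jacobiSym l p := by
    conv_lhs => rw [← Nat.prod_primeFactors_of_squarefree hsf]
    have : ∀ s : Finset ℕ, (∀ p ∈ s, p ≠ 0) → jacobiSym l (∏ p ∈ s, p) = ∏ p ∈ s, jacobiSym l p := by
      intro s
      induction s using Finset.induction_on with
      | empty => simp
      | insert a s ha ih =>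
        intro h
        rw [Finset.prod_insert ha, Finset.prod_insert ha]
        have : NeZero a := ⟨h a (by simp)⟩
        have hs : ∀ p ∈ s, p ≠ 0 := fun p hp => h p (by simp [hp])
        have : NeZero (∏ p ∈ s, p) := ⟨Finset.prod_ne_zero_iff.mpr hs⟩
        rw [jacobiSym.mul_right, ih hs]
    exact this _ fun p hp => (Nat.prime_of_mem_primeFactors hp).ne_zero
  rw [h1]
  congr 1
  have hl4 : l % 4 = 1 ∨ l % 4 = 3 := by
    obtain ⟨k, rfl⟩ := hl2; omega
  have hd4 : d % 4 = 1 ∨ d % 4 = 3 := by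
    obtain ⟨k, rfl⟩ := hd; omega
  unfold qrSign
  rcases hl4 with h | h
  · simp [ZMod.χ₄_nat_one_mod_four h]
  · rw [ZMod.χ₄_nat_three_mod_four h, jacobiSym.at_neg_one hd]
    rcases hd4 with h' | h'
    · simp [ZMod.χ₄_nat_one_mod_four h', h']
    · simp [ZMod.χ₄_nat_three_mod_four h', h']

/-- the genus symbol at `p` -/
def gsym (p l : ℕ) : ℤ := if p = 2 then ZMod.χ₄ (l : ZMod 4) else jacobiSym l p

theorem dirichlet_aux (S : Finset ℕ) (hS : ∀ p ∈ S, p.Prime) (w : ℕ → ℤˣ) (B : ℕ) :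
    ∃ l : ℕ, B < l ∧ l.Prime ∧ ∀ p ∈ S, gsym p l = w p := by
  have h1 : ∀ p ∈ S, ∃ a : ℕ, a.Coprime p ∧
      ∀ n : ℕ, n ≡ a [MOD (if p = 2 then 4 else p)] → gsym p n = w p := by
    intro p hp
    have hpp := hS p hp
    by_cases h2 : p = 2
    · subst h2
      rcases Int.units_eq_one_or (w 2) with h | h
      · refine ⟨1, by simp, fun n hn => ?_⟩
        simp only [gsym, if_true, h] at hn ⊢
        simp [ZMod.χ₄_nat_one_mod_four hn]
      · refine ⟨3, by norm_num, fun n hn => ?_⟩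
        simp only [gsym, if_true, h] at hn ⊢
        simp [ZMod.χ₄_nat_three_mod_four hn]
    · have : Fact p.Prime := ⟨hpp⟩
      have key : ∃ x : ZMod p, quadraticChar (ZMod p) x = w p := by
        rcases Int.units_eq_one_or (w p) with h | h
        · exact ⟨1, by simp [h]⟩
        · rw [h]
          simpa using quadraticChar_exists_neg_one (F := ZMod p) (by rwa [ZMod.ringChar_zmod_n])
      obtain ⟨x, hx⟩ := key
      have hx0 : x ≠ 0 := by
        rintro rfl
        simp at hx
        exact (w p).ne_zero (by exact_mod_cast hx.symm)
      refine ⟨x.val, ?_, fun n hn => ?_⟩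
      · have := ZMod.val_coe_unit_coprime (Units.mk0 x hx0)
        simpa using this
      · simp only [gsym, if_neg h2] at hn ⊢
        rw [← jacobiSym.legendreSym.to_jacobiSym, legendreSym, ← hx]
        congr 1
        have := (ZMod.natCast_eq_natCast_iff _ _ _).mpr hn
        simpa using this
  choose! a ha using h1
  let s : ℕ → ℕ := fun p => if p = 2 then 4 else p
  have hs0 : ∀ p ∈ S, s p ≠ 0 := by
    intro p hp
    simp only [s]; split_ifs
    · norm_num
    · exact (hS p hp).ne_zero
  have hcop : ∀ p ∈ S, ∀ n : ℕ, n.Coprime p → n.Coprime (s p) := by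
    intro p hp n h
    simp only [s]; split_ifs with h2
    · subst h2
      exact Nat.Coprime.pow_right 2 h
    · exact h
  have hpair : (S : Set ℕ).Pairwise (Function.onFun Nat.Coprime s) := by
    intro p hp q hq hpq
    have h := (Nat.coprime_primes (hS p hp) (hS q hq)).mpr hpq
    exact ((hcop p hp _ (hcop q hq _ h).symm)).symm
  obtain ⟨k, hk⟩ := Nat.chineseRemainderOfFinset a s S hs0 hpair
  have hM0 : ∏ p ∈ S, s p ≠ 0 := Finset.prod_ne_zero_iff.mpr hs0
  have : NeZero (∏ p ∈ S, s p) := ⟨hM0⟩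
  have hkM : k.Coprime (∏ p ∈ S, s p) := by
    apply Nat.Coprime.prod_right
    intro p hp
    have h := hcop p hp _ (ha p hp).1
    have h2 := (hk p hp).gcd_eq
    unfold Nat.Coprime at h ⊢
    rw [h2, h]
  obtain ⟨l, hlB, hlp, hlk⟩ := Nat.forall_exists_prime_gt_and_eq_mod
    ((ZMod.isUnit_iff_coprime k _).mpr hkM) B
  refine ⟨l, hlB, hlp, fun p hp => (ha p hp).2 l ?_⟩
  have h1 := (ZMod.natCast_eq_natCast_iff _ _ _).mp hlk
  exact (h1.of_dvd (Finset.dvd_prod_of_mem s hp)).trans (hk p hp)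

theorem card_aux (S T₁ T₂ : Finset ℕ) (hS : 5 ≤ S.card) :
    ∃ (W : Finset (S → ℤˣ)), 5 ≤ W.card ∧ ∀ w ∈ W,
      ∏ p ∈ T₁, (if h : p ∈ S then w ⟨p, h⟩ else 1) = 1 ∧ ∏ p ∈ T₂, (if h : p ∈ S then w ⟨p, h⟩ else 1) = 1 := by
  classical
  let F : (S → ℤˣ) → ℤˣ × ℤˣ := fun w =>
    (∏ p ∈ T₁, (if h : p ∈ S then w ⟨p, h⟩ else 1), ∏ p ∈ T₂, (if h : p ∈ S then w ⟨p, h⟩ else 1))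
  have hF : ∀ u v, F (u * v) = F u * F v := by
    intro u v
    simp only [F, Prod.mk_mul_mk, ← Finset.prod_mul_distrib]
    congr 1 <;> (apply Finset.prod_congr rfl; intro p _; split_ifs <;> simp)
  have hcard : (Finset.univ : Finset (ℤˣ × ℤˣ)).card * 4 < (Finset.univ : Finset (S → ℤˣ)).card := by
    have e1 : (Finset.univ : Finset (ℤˣ × ℤˣ)).card = 4 := by decide
    have e2 : (Finset.univ : Finset (S → ℤˣ)).card = 2 ^ S.card := by simp
    rw [e1, e2]
    calc 4 * 4 < 2 ^ 5 := by norm_num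
      _ ≤ _ := Nat.pow_le_pow_right (by norm_num) hS
  obtain ⟨y, _, hy⟩ := Finset.exists_lt_card_fiber_of_mul_lt_card_of_maps_to
    (f := F) (fun a _ => Finset.mem_univ (F a)) hcard
  obtain ⟨w₀, hw₀⟩ := Finset.card_pos.mp (lt_trans (by norm_num) hy)
  refine ⟨(Finset.univ.filter (fun x => F x = y)).image (· * w₀), ?_, ?_⟩
  · rw [Finset.card_image_of_injective _ (mul_left_injective w₀)]
    exact hy
  · intro w hw
    obtain ⟨v, hv, rfl⟩ := Finset.mem_image.mp hw
    have hv' := (Finset.mem_filter.mp hv).2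
    have hw' := (Finset.mem_filter.mp hw₀).2
    have : F (v * w₀) = 1 := by
      rw [hF, hv', hw']
      ext <;> simp
    exact ⟨congrArg Prod.fst this, congrArg Prod.snd this⟩

theorem gsym_of_form (d p l l' : ℕ) (hp : p.Prime) (hsf : Squarefree d)
    (hl : l.Prime) (hl' : l'.Prime) (hlp : p < l) (hlp' : p < l')
    (hd : (p ∣ d ∧ p ≠ 2) ∨ (p = 2 ∧ d % 4 = 3))
    (A B C : ℚ) (hC : C ≠ 0) (h : (l : ℚ) * l' * C ^ 2 = A ^ 2 - d * B ^ 2) :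
    gsym p l * gsym p l' = 1 := by
  obtain ⟨a, b, c, hc, hh⟩ := rat_clear A B C hC ((l : ℤ) * l') d (by push_cast; exact h)
  unfold gsym
  rcases hd with ⟨hpd, hp2⟩ | ⟨rfl, hd4⟩
  · have : Fact p.Prime := ⟨hp⟩
    have hsq := aux_sq p d ((l : ℤ) * l') (Int.squarefree_natCast.mpr hsf) (by exact_mod_cast hpd)
      _ a b c rfl hc hh
    rw [if_neg hp2, if_neg hp2, ← jacobiSym.mul_left, ← jacobiSym.legendreSym.to_jacobiSym,
      legendreSym.eq_one_iff]
    · exact hsq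
    · push_cast
      have nz : ∀ q : ℕ, q.Prime → p < q → (q : ZMod p) ≠ 0 := by
        intro q hq hpq h0
        rw [ZMod.natCast_eq_zero_iff] at h0
        have := (Nat.prime_dvd_prime_iff_eq hp hq).mp h0
        omega
      exact mul_ne_zero (nz l hl hlp) (nz l' hl' hlp')
  · have o1 : l % 2 = 1 := Nat.odd_iff.mp (hl.odd_of_ne_two (by omega))
    have o2 : l' % 2 = 1 := Nat.odd_iff.mp (hl'.odd_of_ne_two (by omega))
    have h4 := aux_four d ((l : ℤ) * l') (by omega)
      (by rw [Int.mul_emod]; have : (l:ℤ) % 2 = 1 := by omega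
          have h2 : (l':ℤ) % 2 = 1 := by omega
          rw [this, h2]; norm_num) _ a b c rfl hc hh
    simp only [if_true]
    rw [← map_mul, ← Nat.cast_mul]
    exact ZMod.χ₄_nat_one_mod_four (by exact_mod_cast h4)

theorem prod_T (d l : ℕ) (hd : Odd d) (hsf : Squarefree d) (hl : l.Prime) (hl2 : Odd l) :
    jacobiSym d l = ∏ p ∈ d.primeFactors ∪ (if d % 4 = 3 then {2} else ∅), gsym p l := by
  have h2 : 2 ∉ d.primeFactors := fun h =>
    (Nat.not_even_iff_odd.mpr hd) (even_iff_two_dvd.mpr (Nat.dvd_of_mem_primeFactors h))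
  rw [recip_aux d l hd hsf hl hl2]
  have h1 : ∏ p ∈ d.primeFactors, jacobiSym l p = ∏ p ∈ d.primeFactors, gsym p l := by
    apply Finset.prod_congr rfl
    intro p hp
    have : p ≠ 2 := by rintro rfl; exact h2 hp
    simp [gsym, this]
  rw [h1]
  split_ifs with h
  · rw [Finset.prod_union (by simpa using h2), mul_comm]
    simp [gsym]
  · simp

theorem main_aux {K : Type*} [Field K] [NumberField K] (b : Module.Basis (Fin 4) ℚ K)
    (s₁ s₂ : K) (d₁ d₂ : ℕ) (hb : ⇑b = ![1, s₁, s₂, s₁ * s₂])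
    (h₁ : s₁ ^ 2 = (d₁ : K)) (h₂ : s₂ ^ 2 = (d₂ : K))
    (hsf₁ : Squarefree d₁) (hsf₂ : Squarefree d₂) (hodd₁ : Odd d₁) (hodd₂ : Odd d₂)
    (C : Ideal (𝓞 K)) (hE : IsEuclideanIdeal (𝓞 K) K C) :
    (NumberField.discr K).natAbs.primeFactors.card ≤ 4 := by
  classical
  have hm₁ := Nat.odd_iff.mp hodd₁
  have hm₂ := Nat.odd_iff.mp hodd₂
  have hpos₁ : 0 < d₁ := hodd₁.pos
  have hpos₂ : 0 < d₂ := hodd₂.pos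
  set T₁ := d₁.primeFactors ∪ (if d₁ % 4 = 3 then {2} else ∅) with hT₁
  set T₂ := d₂.primeFactors ∪ (if d₂ % 4 = 3 then {2} else ∅) with hT₂
  let S := T₁ ∪ T₂
  have hmem : ∀ d p : ℕ, 0 < d → d % 2 = 1 →
      (p ∈ d.primeFactors ∪ (if d % 4 = 3 then {2} else ∅) ↔
        p.Prime ∧ ((p ∣ d ∧ p ≠ 2) ∨ (p = 2 ∧ d % 4 = 3))) := by
    intro d p hd hodd
    rw [Finset.mem_union, Nat.mem_primeFactors_of_ne_zero hd.ne']
    constructor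
    · rintro (⟨h1, h2⟩ | h)
      · refine ⟨h1, Or.inl ⟨h2, ?_⟩⟩
        rintro rfl; omega
      · split_ifs at h with h3
        · rw [Finset.mem_singleton] at h
          exact ⟨h ▸ Nat.prime_two, Or.inr ⟨h, h3⟩⟩
        · simp at h
    · rintro ⟨h1, ⟨h2, _⟩ | ⟨h2, h3⟩⟩
      · exact Or.inl ⟨h1, h2⟩
      · right; simp [h2, h3]
  have hSp : ∀ p ∈ S, p.Prime := by
    intro p hp
    rcases Finset.mem_union.mp hp with h | h
    · exact ((hmem d₁ p hpos₁ hm₁).mp h).1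
    · exact ((hmem d₂ p hpos₂ hm₂).mp h).1
  have hsub : (NumberField.discr K).natAbs.primeFactors ⊆ S := by
    intro p hp
    have hpp := Nat.prime_of_mem_primeFactors hp
    have hpd : (p : ℤ) ∣ discr K := Int.natCast_dvd.mpr (Nat.dvd_of_mem_primeFactors hp)
    have key := discr_primes b s₁ s₂ d₁ d₂ hb (by simpa using h₁) (by simpa using h₂) p hpp hpd
    rw [Finset.mem_union, hmem d₁ p hpos₁ hm₁, hmem d₂ p hpos₂ hm₂]
    rcases key with h | h | ⟨rfl, h⟩
    · left
      have h' : p ∣ d₁ := by exact_mod_cast h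
      exact ⟨hpp, Or.inl ⟨h', by rintro rfl; omega⟩⟩
    · right
      have h' : p ∣ d₂ := by exact_mod_cast h
      exact ⟨hpp, Or.inl ⟨h', by rintro rfl; omega⟩⟩
    · by_cases h3 : d₁ % 4 = 3
      · exact Or.inl ⟨hpp, Or.inr ⟨rfl, h3⟩⟩
      · exact Or.inr ⟨hpp, Or.inr ⟨rfl, by omega⟩⟩
  by_contra hcon
  have hS5 : 5 ≤ S.card := by
    have := Finset.card_le_card hsub
    omega
  obtain ⟨W, hW5, hW⟩ := card_aux S T₁ T₂ hS5
  have hex : ∀ w ∈ W, ∃ (l k : ℕ) (ε : ℤˣ) (α : K) (q : ℚ), l.Prime ∧ d₁ + d₂ + 2 < l ∧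
      (∀ p : S, gsym p l = w p) ∧ α ≠ 0 ∧ q ≠ 0 ∧
      (l : ℚ) = (ε : ℤ) * (Ideal.absNorm C : ℚ) ^ k * Algebra.norm ℚ α * q ^ 2 := by
    intro w hw
    obtain ⟨l, hlB, hlp, hls⟩ := dirichlet_aux S hSp (fun p => if h : p ∈ S then w ⟨p, h⟩ else 1)
      (d₁ + d₂ + 2)
    have hlF : Fact l.Prime := ⟨hlp⟩
    have hl2 : Odd l := hlp.odd_of_ne_two (by omega)
    have nz : ∀ n : ℕ, 0 < n → n < l → (n : ZMod l) ≠ 0 := by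
      intro n hn hnl h0
      rw [ZMod.natCast_eq_zero_iff] at h0
      exact absurd (Nat.le_of_dvd hn h0) (by omega)
    have hsq : ∀ d : ℕ, d.primeFactors ∪ (if d % 4 = 3 then {2} else ∅) ⊆ S → 0 < d → d < l →
        Odd d → Squarefree d →
        ∏ p ∈ d.primeFactors ∪ (if d % 4 = 3 then {2} else ∅),
          (if h : p ∈ S then w ⟨p, h⟩ else 1) = 1 → IsSquare ((d : ℤ) : ZMod l) := by
      intro d hdS hd0 hdl hd hsf hprod
      have h1 := prod_T d l hd hsf hlp hl2
      rw [Finset.prod_congr rfl (fun p hp => hls p (hdS hp))] at h1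
      have h2 := congrArg (Units.val) hprod
      rw [Units.coe_prod, ← h1, Units.val_one, ← jacobiSym.legendreSym.to_jacobiSym,
        legendreSym.eq_one_iff] at h2
      · exact h2
      · simpa using nz d hd0 hdl
    have q₁ := hsq d₁ Finset.subset_union_left hpos₁ (by omega) hodd₁ hsf₁ (hW w hw).1
    have q₂ := hsq d₂ Finset.subset_union_right hpos₂ (by omega) hodd₂ hsf₂ (hW w hw).2
    have h4 : (4 : ZMod l) ≠ 0 := by
      have h22 := nz 2 (by norm_num) (by omega)
      have : (4 : ZMod l) = ((2 : ℕ) : ZMod l) * ((2 : ℕ) : ZMod l) := by norm_num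
      rw [this]
      exact mul_ne_zero h22 h22
    obtain ⟨I, hI⟩ := exists_ideal_norm b s₁ s₂ d₁ d₂ hb (by simpa using h₁) (by simpa using h₂) l
      (by
        simp only [Int.cast_natCast]
        exact mul_ne_zero (mul_ne_zero h4 (nz d₁ hpos₁ (by omega))) (nz d₂ hpos₂ (by omega)))
      q₁ q₂
    have hI0 : I ≠ 0 := by
      rintro rfl
      rw [Ideal.zero_eq_bot, Ideal.absNorm_bot] at hI
      exact hlp.ne_zero hI.symm
    obtain ⟨k, ε, α, q, hα, hq, h⟩ := euclid_norm C hE I hI0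
    rw [hI] at h
    refine ⟨l, k, ε, α, q, hlp, hlB, ?_, hα, hq, h⟩
    intro p
    have := hls p p.2
    simpa using this
  choose! l k ε α q hlp hlB hls hα hq h using hex
  have hNC : (Ideal.absNorm C : ℚ) ≠ 0 := by
    exact_mod_cast (Ideal.absNorm_ne_zero_iff_mem_nonZeroDivisors.mpr
      (mem_nonZeroDivisors_of_ne_zero hE.1))
  obtain ⟨w, hw, w', hw', hne, heq⟩ := Finset.exists_ne_map_eq_of_card_lt_of_maps_to
    (s := W) (t := (Finset.univ : Finset (ZMod 2 × ℤˣ)))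
    (f := fun w => ((k w : ZMod 2), ε w))
    (by
      have e1 : (Finset.univ : Finset (ZMod 2 × ℤˣ)).card = 4 := by decide
      omega) (fun _ _ => Finset.mem_univ _)
  apply hne
  rw [Prod.mk.injEq] at heq
  obtain ⟨m, hm⟩ : ∃ m, k w + k w' = 2 * m := by
    have := (ZMod.natCast_eq_natCast_iff _ _ _).mp heq.1
    unfold Nat.ModEq at this
    exact ⟨(k w + k w') / 2, by omega⟩
  set Q := (Ideal.absNorm C : ℚ) ^ m * q w * q w' with hQ
  have hQ0 : Q ≠ 0 := mul_ne_zero (mul_ne_zero (pow_ne_zero _ hNC) (hq w hw)) (hq w' hw')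
  have hprod : (l w : ℚ) * l w' * (Q⁻¹) ^ 2 = Algebra.norm ℚ (α w * α w') := by
    have hεε : ((ε w' : ℤ) : ℚ) * (ε w' : ℤ) = 1 := by
      exact_mod_cast Int.isUnit_mul_self (ε w').isUnit
    have hpow : (Ideal.absNorm C : ℚ) ^ k w * (Ideal.absNorm C : ℚ) ^ k w' =
        ((Ideal.absNorm C : ℚ) ^ m) ^ 2 := by
      rw [← pow_add, hm, mul_comm, pow_mul]
    have : (l w : ℚ) * l w' = Algebra.norm ℚ (α w * α w') * Q ^ 2 := by
      rw [h w hw, h w' hw', heq.2, map_mul, hQ]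
      calc _ = (((ε w' : ℤ) : ℚ) * (ε w' : ℤ)) *
            ((Ideal.absNorm C : ℚ) ^ k w * (Ideal.absNorm C : ℚ) ^ k w') *
            (Algebra.norm ℚ (α w) * Algebra.norm ℚ (α w')) * (q w ^ 2 * q w' ^ 2) := by ring
        _ = _ := by rw [hεε, hpow]; ring
    rw [this]
    field_simp
  obtain ⟨⟨A₁, B₁, hAB₁⟩, ⟨A₂, B₂, hAB₂⟩⟩ := norm_form b s₁ s₂ d₁ d₂ hb
    (by simpa using h₁) (by simpa using h₂) (α w * α w')
  ext p
  have hg : gsym p (l w) * gsym p (l w') = 1 := by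
    have hB := hlB w hw
    have hB' := hlB w' hw'
    have hle : ∀ d : ℕ, 0 < d → (((p:ℕ) ∣ d ∧ (p:ℕ) ≠ 2) ∨ ((p:ℕ) = 2 ∧ d % 4 = 3)) →
        (p:ℕ) ≤ d + 2 := by
      rintro d hd (⟨h, _⟩ | ⟨h, _⟩)
      · have := Nat.le_of_dvd hd h; omega
      · omega
    rcases Finset.mem_union.mp p.2 with hp | hp
    · obtain ⟨hpp, hpd⟩ := (hmem d₁ p hpos₁ hm₁).mp hp
      have := hle d₁ hpos₁ hpd
      exact gsym_of_form d₁ p _ _ hpp hsf₁ (hlp w hw) (hlp w' hw') (by omega) (by omega) hpd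
        A₁ B₁ Q⁻¹ (inv_ne_zero hQ0) (hprod.trans hAB₁)
    · obtain ⟨hpp, hpd⟩ := (hmem d₂ p hpos₂ hm₂).mp hp
      have := hle d₂ hpos₂ hpd
      exact gsym_of_form d₂ p _ _ hpp hsf₂ (hlp w hw) (hlp w' hw') (by omega) (by omega) hpd
        A₂ B₂ Q⁻¹ (inv_ne_zero hQ0) (hprod.trans hAB₂)
  rw [hls w hw p, hls w' hw' p] at hg
  have hg' : w p * w' p = 1 := by
    ext; simpa using hg
  have := mul_eq_one_iff_eq_inv.mp hg'
  rw [this, Int.units_inv_eq_self]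

theorem biquad_span (d₁ d₂ : ℤ) (s₁ s₂ : ℂ) (h₁ : s₁ ^ 2 = (d₁ : ℂ)) (h₂ : s₂ ^ 2 = (d₂ : ℂ))
    (x : ℂ) (hx : x ∈ biquad d₁ d₂) :
    ∃ a b c e : ℚ, x = a + b * s₁ + c * s₂ + e * (s₁ * s₂) := by
  have halg : ∀ x ∈ {x : ℂ | x ^ 2 = (d₁ : ℂ) ∨ x ^ 2 = (d₂ : ℂ)}, IsAlgebraic ℚ x := by
    intro x hx
    have : IsAlgebraic ℚ (x ^ 2) := by
      rcases hx with h | h <;> rw [h] <;> exact isAlgebraic_int _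
    exact this.of_pow (by norm_num)
  unfold biquad at hx
  rw [← IntermediateField.mem_toSubalgebra, IntermediateField.adjoin_toSubalgebra_of_isAlgebraic halg] at hx
  induction hx using Algebra.adjoin_induction with
  | mem x hx =>
    rcases hx with h | h
    · rw [← h₁] at h
      rcases sq_eq_sq_iff_eq_or_eq_neg.mp h with h | h
      · exact ⟨0, 1, 0, 0, by simp [h]⟩
      · exact ⟨0, -1, 0, 0, by simp [h]⟩
    · rw [← h₂] at h
      rcases sq_eq_sq_iff_eq_or_eq_neg.mp h with h | h
      · exact ⟨0, 0, 1, 0, by simp [h]⟩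
      · exact ⟨0, 0, -1, 0, by simp [h]⟩
  | algebraMap r => exact ⟨r, 0, 0, 0, by simp⟩
  | add x y _ _ hx hy =>
    obtain ⟨a, b, c, e, rfl⟩ := hx
    obtain ⟨a', b', c', e', rfl⟩ := hy
    exact ⟨a + a', b + b', c + c', e + e', by push_cast; ring⟩
  | mul x y _ _ hx hy =>
    obtain ⟨a, b, c, e, rfl⟩ := hx
    obtain ⟨a', b', c', e', rfl⟩ := hy
    refine ⟨a * a' + b * b' * d₁ + c * c' * d₂ + e * e' * d₁ * d₂,
      a * b' + b * a' + (c * e' + e * c') * d₂, a * c' + c * a' + (b * e' + e * b') * d₁,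
      a * e' + e * a' + b * c' + c * b', ?_⟩
    push_cast
    rw [← h₁, ← h₂]; ring

theorem stmt13 (d₁ d₂ : ℤ) (hsf₁ : Squarefree d₁) (hsf₂ : Squarefree d₂)
    (hodd₁ : Odd d₁) (hodd₂ : Odd d₂) (hpos₁ : 0 < d₁) (hpos₂ : 0 < d₂)
    (hne : d₁ ≠ d₂) (h1 : d₁ ≠ 1) (h2 : d₂ ≠ 1) (hnsq : ¬ IsSquare (d₁ * d₂))
    [NumberField (biquad d₁ d₂)]
    (hdeg : Module.finrank ℚ (biquad d₁ d₂) = 4)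
    (hE : ∃ C : Ideal (𝓞 (biquad d₁ d₂)),
      IsEuclideanIdeal (𝓞 (biquad d₁ d₂)) (biquad d₁ d₂) C) :
    (NumberField.discr (biquad d₁ d₂)).natAbs.primeFactors.card ≤ 4 := by
  lift d₁ to ℕ using hpos₁.le
  lift d₂ to ℕ using hpos₂.le
  obtain ⟨C, hC⟩ := hE
  obtain ⟨t₁, ht₁⟩ := IsAlgClosed.exists_pow_nat_eq ((d₁ : ℤ) : ℂ) (n := 2) (by norm_num)
  obtain ⟨t₂, ht₂⟩ := IsAlgClosed.exists_pow_nat_eq ((d₂ : ℤ) : ℂ) (n := 2) (by norm_num)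
  let s₁ : biquad d₁ d₂ := ⟨t₁, IntermediateField.subset_adjoin _ _ (Or.inl ht₁)⟩
  let s₂ : biquad d₁ d₂ := ⟨t₂, IntermediateField.subset_adjoin _ _ (Or.inr ht₂)⟩
  have hs₁ : s₁ ^ 2 = (d₁ : biquad d₁ d₂) := by
    apply Subtype.ext
    simpa [s₁] using ht₁
  have hs₂ : s₂ ^ 2 = (d₂ : biquad d₁ d₂) := by
    apply Subtype.ext
    simpa [s₂] using ht₂
  have hspan : ⊤ ≤ Submodule.span ℚ (Set.range ![1, s₁, s₂, s₁ * s₂]) := by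
    rintro x -
    obtain ⟨a, b, c, e, h⟩ := biquad_span d₁ d₂ t₁ t₂ ht₁ ht₂ x x.2
    have hx : x = a • 1 + b • s₁ + c • s₂ + e • (s₁ * s₂) := by
      apply Subtype.ext
      rw [h]
      simp [s₁, s₂, Rat.smul_def]
    rw [hx]
    have hm : ∀ i, (![1, s₁, s₂, s₁ * s₂] : Fin 4 → biquad d₁ d₂) i ∈
        Submodule.span ℚ (Set.range ![1, s₁, s₂, s₁ * s₂]) :=
      fun i => Submodule.subset_span ⟨i, rfl⟩
    exact add_mem (add_mem (add_mem (Submodule.smul_mem _ _ (hm 0)) (Submodule.smul_mem _ _ (hm 1)))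
      (Submodule.smul_mem _ _ (hm 2))) (Submodule.smul_mem _ _ (hm 3))
  exact main_aux (basisOfTopLeSpanOfCardEqFinrank _ hspan (by simp [hdeg])) s₁ s₂ d₁ d₂
    (coe_basisOfTopLeSpanOfCardEqFinrank _ hspan (by simp [hdeg])) hs₁ hs₂
    (Int.squarefree_natCast.mp hsf₁) (Int.squarefree_natCast.mp hsf₂)
    (by exact_mod_cast hodd₁) (by exact_mod_cast hodd₂) C hC
end
end

section
/- Fix an integer n ≥ 1. Let 𝒮 be the set of biquadratic fields K = ℚ(√a, √b) ⊆ ℂ with a, b odd squarefree integers and [K:ℚ] = 4, and let 𝒮_n(X) be the number of K ∈ 𝒮 with genus number 2ⁿ, i.e. with ω(|Δ_K|) = n + 2, and |Δ_K| ≤ X. Then there is a constant C(n) such that for all sufficiently large X, 𝒮_n(X) ≤ C(n) · (√X / log X) · (log log X)^{n+1}. -/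
open IntermediateField NumberField Filter
noncomputable section
open scoped Classical
def biquadFamily : Set (IntermediateField ℚ ℂ) :=
  {K | ∃ a b : ℤ, Odd a ∧ Odd b ∧ Squarefree a ∧ Squarefree b ∧
    Module.finrank ℚ K = 4 ∧ K = biquad a b}
def absDisc (K : IntermediateField ℚ ℂ) : ℕ :=
  if h : FiniteDimensional ℚ K then
    haveI := h
    haveI : NumberField K := ⟨⟩
    (NumberField.discr K).natAbs
  else 0
/-- The number of `K ∈ 𝒮` with genus number `2ⁿ` (i.e. `ω(|Δ_K|) = n + 2`) and `|Δ_K| ≤ X`. -/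
def countSn (n : ℕ) (X : ℝ) : ℕ :=
  Nat.card {K : IntermediateField ℚ ℂ // K ∈ biquadFamily ∧
    (absDisc K).primeFactors.card = n + 2 ∧ (absDisc K : ℝ) ≤ X}


lemma sq_dvd_discr (K : Type*) [Field K] [NumberField K] (hK : Module.finrank ℚ K = 4)
    (s : 𝓞 K) (a : ℤ) (hs : s ^ 2 = (a : 𝓞 K)) (ha : Squarefree a) (p : ℕ) (hp : p.Prime)
    (hpa : (p : ℤ) ∣ a) : p ^ 2 ∣ (discr K).natAbs := by
  obtain ⟨c, rfl⟩ := hpa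
  have hpi : Prime (p : ℤ) := Nat.prime_iff_prime_int.mp hp
  have hcop : IsCoprime (p : ℤ) c := by
    rw [Prime.coprime_iff_not_dvd hpi]
    rintro ⟨d, rfl⟩
    exact hpi.not_isUnit (ha p ⟨d, by ring⟩)
  obtain ⟨u, v, huv⟩ := hcop
  have huv' : (u : 𝓞 K) * p + v * c = 1 := by exact_mod_cast congrArg (Int.cast : ℤ → 𝓞 K) huv
  push_cast at hs
  set I : Ideal (𝓞 K) := Ideal.span {s, (p : 𝓞 K)} with hI
  have hI2 : I ^ 2 = Ideal.span {(p : 𝓞 K)} := by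
    rw [hI, pow_two, Ideal.span_pair_mul_span_pair]
    apply le_antisymm
    · rw [Ideal.span_le]
      intro y hy
      simp only [Set.mem_insert_iff, Set.mem_singleton_iff] at hy
      rw [SetLike.mem_coe, Ideal.mem_span_singleton]
      rcases hy with rfl | rfl | rfl | rfl
      · exact ⟨c, by rw [← hs]; ring⟩
      · exact ⟨s, by ring⟩
      · exact ⟨s, by ring⟩
      · exact ⟨p, by ring⟩
    · rw [Ideal.span_singleton_le_iff_mem]
      have : (p : 𝓞 K) = u * (p * p) + v * (s * s) := by
        rw [← pow_two s, hs]
        linear_combination (-(p : 𝓞 K)) * huv'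
      have hm : (u : 𝓞 K) * (p * p) + v * (s * s) ∈
          Ideal.span {s * s, s * (p : 𝓞 K), (p : 𝓞 K) * s, (p : 𝓞 K) * p} :=
        Ideal.add_mem _ (Ideal.mul_mem_left _ _ (Ideal.subset_span (by simp)))
        (Ideal.mul_mem_left _ _ (Ideal.subset_span (by simp)))
      rwa [← this] at hm
  have hdvd : I ∣ differentIdeal ℤ (𝓞 K) := by
    have : (Ideal.span {(p : ℤ)}).IsMaximal :=
      ((Ideal.span_singleton_prime hpi.ne_zero).mpr hpi).isMaximal (by simpa using hpi.ne_zero)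
    have h := pow_sub_one_dvd_differentIdeal ℤ (p := Ideal.span {(p : ℤ)}) I 2
      (by simpa using hpi.ne_zero) (by rw [hI2, Ideal.map_span]; simp)
    simpa using h
  have hN : Ideal.absNorm I ^ 2 = (p ^ 2) ^ 2 := by
    rw [← map_pow, hI2, Ideal.absNorm_span_singleton]
    have : (p : 𝓞 K) = algebraMap ℤ (𝓞 K) p := by simp
    rw [this, Algebra.norm_algebraMap, RingOfIntegers.rank, hK]
    simp [Int.natAbs_pow]; ring
  have hN' : Ideal.absNorm I = p ^ 2 := Nat.pow_left_injective (n := 2) (by norm_num) hN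
  rw [← absNorm_differentIdeal K (𝓞 K), ← hN']
  exact Ideal.absNorm_dvd_absNorm_of_le (Ideal.dvd_iff_le.mp hdvd)

/-- Sets of at most `k` primes with product at most `x`. -/
def FF (k : ℕ) (x : ℝ) : Finset (Finset ℕ) :=
  (Nat.primesLE ⌊x⌋₊).powerset.filter (fun S => S.card ≤ k ∧ ((∏ p ∈ S, p : ℕ) : ℝ) ≤ x)

lemma mem_FF {k : ℕ} {x : ℝ} {S : Finset ℕ} :
    S ∈ FF k x ↔ (∀ p ∈ S, p.Prime) ∧ S.card ≤ k ∧ ((∏ p ∈ S, p : ℕ) : ℝ) ≤ x := by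
  unfold FF
  rw [Finset.mem_filter, Finset.mem_powerset]
  constructor
  · rintro ⟨h1, h2⟩
    exact ⟨fun p hp => (Nat.mem_primesLE.mp (h1 hp)).2, h2⟩
  · rintro ⟨h1, h2⟩
    refine ⟨fun p hp => Nat.mem_primesLE.mpr ⟨?_, h1 p hp⟩, h2⟩
    apply Nat.le_floor
    refine le_trans ?_ h2.2
    exact_mod_cast Nat.le_of_dvd (Finset.prod_pos fun q hq => (h1 q hq).pos)
      (Finset.dvd_prod_of_mem (fun p : ℕ => p) hp)

def LL (x : ℝ) : ℝ := 1 + ∑ p ∈ Nat.primesLE ⌊x⌋₊, (1 / (p : ℝ))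

lemma LL_mono {x y : ℝ} (h : x ≤ y) : LL x ≤ LL y := by
  unfold LL
  gcongr
  intro p hp
  rw [Nat.mem_primesLE] at *
  exact ⟨hp.1.trans (Nat.floor_mono h), hp.2⟩

lemma one_le_LL (x : ℝ) : 1 ≤ LL x := by
  unfold LL
  have : 0 ≤ ∑ p ∈ Nat.primesLE ⌊x⌋₊, (1 / (p : ℝ)) := Finset.sum_nonneg fun _ _ => by positivity
  linarith

lemma pi_bound : ∃ C : ℝ, 0 < C ∧ ∀ x : ℝ, 1 < x →
    (1 + (Nat.primeCounting ⌊x⌋₊ : ℝ)) ≤ C * (x / Real.log x) := by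
  refine ⟨2 * Real.log 4 + 3, by positivity, fun x hx => ?_⟩
  have hl : 0 < Real.log x := Real.log_pos hx
  have h := Chebyshev.pi_le_log4_mul_div hx
  have hx0 : 0 < x := by linarith
  have e : Real.log √x = Real.log x / 2 := Real.log_sqrt hx0.le
  have h1 : 1 ≤ x / Real.log x := by
    rw [le_div_iff₀ hl]; linarith [Real.log_le_sub_one_of_pos hx0]
  have h2 : √x ≤ 2 * (x / Real.log x) := by
    rw [← mul_div_assoc, le_div_iff₀ hl]
    have := Real.log_le_sub_one_of_pos (Real.sqrt_pos.mpr hx0)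
    have h3 := Real.mul_self_sqrt hx0.le
    have := Real.sqrt_pos.mpr hx0
    nlinarith
  have h4 : Real.log 4 * x / (Real.log x / 2) = 2 * Real.log 4 * (x / Real.log x) := by
    field_simp
  rw [e, h4] at h
  linarith

lemma FF_one (x : ℝ) : ((FF 1 x).card : ℝ) ≤ 1 + (Nat.primeCounting ⌊x⌋₊ : ℝ) := by
  have : FF 1 x ⊆ {∅} ∪ (Nat.primesLE ⌊x⌋₊).image (fun p => {p}) := by
    intro S hS
    have h1 : S.card ≤ 1 := (mem_FF.mp hS).2.1
    have h2 : S ⊆ Nat.primesLE ⌊x⌋₊ := Finset.mem_powerset.mp (Finset.mem_filter.mp hS).1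
    rw [Finset.mem_union]
    rcases S.eq_empty_or_nonempty with rfl | ⟨p, hp⟩
    · simp
    · right
      rw [Finset.mem_image]
      refine ⟨p, h2 hp, ?_⟩
      symm
      exact Finset.eq_singleton_iff_unique_mem.mpr
        ⟨hp, fun q hq => Finset.card_le_one.mp h1 q hq p hp⟩
  have h := Finset.card_le_card this
  have h2 := h.trans (Finset.card_union_le _ _)
  have h3 := Finset.card_image_le (s := Nat.primesLE ⌊x⌋₊) (f := fun p => ({p} : Finset ℕ))
  rw [Nat.primesLE_card_eq_primeCounting] at h3
  rw [Finset.card_singleton] at h2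
  exact_mod_cast h2.trans (by omega)

lemma FF_succ (k : ℕ) (x : ℝ) : ((FF (k + 1) x).card : ℝ) ≤
    (FF 1 x).card + ∑ p ∈ Nat.primesLE ⌊√x⌋₊, ((FF k (x / p)).card : ℝ) := by
  have : FF (k + 1) x ⊆ FF 1 x ∪ (Nat.primesLE ⌊√x⌋₊).biUnion
      (fun p => (FF k (x / p)).image (insert p)) := by
    intro S hS
    obtain ⟨h1, h2, h3⟩ := mem_FF.mp hS
    rw [Finset.mem_union]
    by_cases hc : S.card ≤ 1
    · exact Or.inl (mem_FF.mpr ⟨h1, hc, h3⟩)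
    right
    obtain ⟨p, hp, q, hq, hpq⟩ : ∃ p ∈ S, ∃ q ∈ S, p < q := by
      obtain ⟨p, hp, q, hq, hne⟩ := Finset.one_lt_card.mp (not_le.mp hc)
      rcases lt_or_gt_of_ne hne with h | h
      · exact ⟨p, hp, q, hq, h⟩
      · exact ⟨q, hq, p, hp, h⟩
    have hprod : p * ∏ r ∈ S.erase p, r = ∏ r ∈ S, r := Finset.mul_prod_erase S (fun r => r) hp
    have hqle : q ≤ ∏ r ∈ S.erase p, r :=
      Nat.le_of_dvd (Finset.prod_pos fun r hr => (h1 r (Finset.mem_of_mem_erase hr)).pos)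
        (Finset.dvd_prod_of_mem (fun p : ℕ => p) (Finset.mem_erase.mpr ⟨hpq.ne', hq⟩))
    have hp0 : (0 : ℝ) < p := by exact_mod_cast (h1 p hp).pos
    rw [Finset.mem_biUnion]
    refine ⟨p, Nat.mem_primesLE.mpr ⟨?_, h1 p hp⟩, ?_⟩
    · apply Nat.le_floor
      apply Real.le_sqrt_of_sq_le
      refine le_trans ?_ h3
      rw [← hprod]
      have : p ^ 2 ≤ p * ∏ r ∈ S.erase p, r := by
        rw [pow_two]; exact Nat.mul_le_mul_left _ (hpq.le.trans hqle)
      exact_mod_cast this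
    · rw [Finset.mem_image]
      refine ⟨S.erase p, mem_FF.mpr ⟨fun r hr => h1 r (Finset.mem_of_mem_erase hr), ?_, ?_⟩,
        Finset.insert_erase hp⟩
      · rw [Finset.card_erase_of_mem hp]; omega
      · rw [le_div_iff₀ hp0, mul_comm]
        rw [← hprod] at h3
        exact_mod_cast h3
  have h := (Finset.card_le_card this).trans (Finset.card_union_le _ _)
  have h2 : ((Nat.primesLE ⌊√x⌋₊).biUnion
      (fun p => (FF k (x / p)).image (insert p))).card ≤
      ∑ p ∈ Nat.primesLE ⌊√x⌋₊, (FF k (x / p)).card :=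
    Finset.card_biUnion_le.trans (Finset.sum_le_sum fun p _ => Finset.card_image_le)
  exact_mod_cast h.trans (Nat.add_le_add_left h2 _)

lemma FF_bound (k : ℕ) : ∃ C : ℝ, 0 < C ∧ ∀ x : ℝ, 1 < x →
    ((FF (k + 1) x).card : ℝ) ≤ C * (x / Real.log x) * LL x ^ k := by
  obtain ⟨C1, hC1, h1⟩ := pi_bound
  induction k with
  | zero =>
    exact ⟨C1, hC1, fun x hx => by simpa using (FF_one x).trans (h1 x hx)⟩
  | succ k ih =>
    obtain ⟨C, hC, h⟩ := ih
    refine ⟨C1 + 2 * C, by positivity, fun x hx => ?_⟩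
    have hl : 0 < Real.log x := Real.log_pos hx
    have hx0 : 0 < x := by linarith
    have hL := one_le_LL x
    have hs1 : 1 < √x := by rw [Real.lt_sqrt] <;> linarith
    have hsx : √x ≤ x := by
      have := Real.mul_self_sqrt hx0.le
      nlinarith
    have key : ∀ p ∈ Nat.primesLE ⌊√x⌋₊, ((FF (k + 1) (x / p)).card : ℝ) ≤
        2 * C * (x / Real.log x) * LL x ^ k * (1 / p) := by
      intro p hp
      obtain ⟨hp1, hp2⟩ := Nat.mem_primesLE.mp hp
      have hp0 : (0 : ℝ) < p := by exact_mod_cast hp2.pos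
      have hp1' : (p : ℝ) ≤ √x := (Nat.le_floor_iff (Real.sqrt_nonneg x)).mp hp1
      have hge : √x ≤ x / p := by
        rw [le_div_iff₀ hp0]
        calc √x * p ≤ √x * √x := by gcongr
          _ = x := Real.mul_self_sqrt hx0.le
      have hpx : x / p ≤ x := div_le_self hx0.le (by exact_mod_cast hp2.one_le)
      have hlog : Real.log x / 2 ≤ Real.log (x / p) := by
        rw [← Real.log_sqrt hx0.le]
        exact Real.log_le_log (by linarith) hge
      have hLp : (0:ℝ) ≤ LL (x / p) := by linarith [one_le_LL (x / p)]
      calc ((FF (k + 1) (x / p)).card : ℝ) ≤ C * (x / p / Real.log (x / p)) * LL (x / p) ^ k :=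
            h _ (by linarith)
        _ ≤ C * (x / p / (Real.log x / 2)) * LL x ^ k := by
            have := LL_mono hpx
            gcongr
        _ = _ := by field_simp
    calc ((FF (k + 1 + 1) x).card : ℝ) ≤ _ := FF_succ (k + 1) x
      _ ≤ C1 * (x / Real.log x) + ∑ p ∈ Nat.primesLE ⌊√x⌋₊,
            2 * C * (x / Real.log x) * LL x ^ k * (1 / p) :=
          add_le_add ((FF_one x).trans (h1 x hx)) (Finset.sum_le_sum key)
      _ = C1 * (x / Real.log x) + 2 * C * (x / Real.log x) * LL x ^ k * (LL √x - 1) := by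
          rw [← Finset.mul_sum, show LL √x - 1 = ∑ p ∈ Nat.primesLE ⌊√x⌋₊, (1 / (p : ℝ)) by
            unfold LL; ring]
      _ ≤ C1 * (x / Real.log x) * LL x ^ (k + 1) +
            2 * C * (x / Real.log x) * LL x ^ k * LL x := by
          have h5 : 1 ≤ LL x ^ (k + 1) := one_le_pow₀ hL
          have h6 := LL_mono hsx
          apply add_le_add
          · exact le_mul_of_one_le_right (by positivity) h5
          · gcongr
            linarith
      _ = _ := by ring

lemma LL_two_pow : ∃ C : ℝ, 0 < C ∧ ∀ N : ℕ, LL ((2 : ℝ) ^ N) ≤ 1 + C * (harmonic N : ℝ) := by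
  obtain ⟨C1, hC1, h1⟩ := pi_bound
  refine ⟨C1 * 2 / Real.log 2, by positivity, fun N => ?_⟩
  induction N with
  | zero => 
    have : Nat.primesLE 1 = ∅ := by decide
    simp [LL, this]
  | succ N ih =>
    have e : ∀ M : ℕ, ⌊(2 : ℝ) ^ M⌋₊ = 2 ^ M := fun M => by
      rw [show (2 : ℝ) ^ M = ((2 ^ M : ℕ) : ℝ) by push_cast; rfl, Nat.floor_natCast]
    have hsub : Nat.primesLE (2 ^ N) ⊆ Nat.primesLE (2 ^ (N + 1)) := by
      intro p hp
      rw [Nat.mem_primesLE] at *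
      exact ⟨hp.1.trans (Nat.pow_le_pow_right (by norm_num) (by omega)), hp.2⟩
    have h2 : LL ((2 : ℝ) ^ (N + 1)) = LL ((2 : ℝ) ^ N) +
        ∑ p ∈ Nat.primesLE (2 ^ (N + 1)) \ Nat.primesLE (2 ^ N), (1 / (p : ℝ)) := by
      unfold LL
      rw [e, e, ← Finset.sum_sdiff hsub]; ring
    have h3 : ∑ p ∈ Nat.primesLE (2 ^ (N + 1)) \ Nat.primesLE (2 ^ N), (1 / (p : ℝ)) ≤
        (Nat.primeCounting (2 ^ (N + 1)) : ℝ) * (1 / 2 ^ N) := by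
      refine (Finset.sum_le_card_nsmul _ _ (1 / 2 ^ N) ?_).trans ?_
      · intro p hp
        rw [Finset.mem_sdiff, Nat.mem_primesLE, Nat.mem_primesLE] at hp
        have : 2 ^ N ≤ p := by
          by_contra hh
          exact hp.2 ⟨by omega, hp.1.2⟩
        have : (2 : ℝ) ^ N ≤ p := by exact_mod_cast this
        gcongr
      · rw [nsmul_eq_mul, ← Nat.primesLE_card_eq_primeCounting]
        gcongr
        exact Finset.sdiff_subset
    have h4 := h1 ((2 : ℝ) ^ (N + 1)) (one_lt_pow₀ (by norm_num) (by omega))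
    rw [e, Real.log_pow] at h4
    have h5 : (Nat.primeCounting (2 ^ (N + 1)) : ℝ) * (1 / 2 ^ N) ≤
        C1 * (2 ^ (N + 1) / (((N + 1 : ℕ) : ℝ) * Real.log 2)) * (1 / 2 ^ N) := by
      gcongr
      linarith
    have h6 : C1 * ((2:ℝ) ^ (N + 1) / (((N + 1 : ℕ) : ℝ) * Real.log 2)) * (1 / 2 ^ N) =
        C1 * 2 / Real.log 2 * ((N + 1 : ℕ) : ℝ)⁻¹ := by
      have : Real.log 2 ≠ 0 := by positivity
      field_simp
      ring
    rw [harmonic_succ]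
    push_cast at *
    rw [mul_add]
    linarith

lemma LL_bound : ∃ A : ℝ, 0 < A ∧ ∀ᶠ x : ℝ in atTop, LL x ≤ A * Real.log (Real.log x) := by
  obtain ⟨C, hC, h⟩ := LL_two_pow
  refine ⟨1 + 4 * C, by positivity, ?_⟩
  have ev := (Real.tendsto_log_atTop.comp Real.tendsto_log_atTop).eventually_ge_atTop 1
  filter_upwards [ev, eventually_gt_atTop 1, Real.tendsto_log_atTop.eventually_ge_atTop 1]
    with x h1 hx hlx
  simp only [Function.comp] at h1
  set N := ⌈2 * Real.log x⌉₊ with hN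
  have hN1 : 2 * Real.log x ≤ N := Nat.le_ceil _
  have hN2 : (N : ℝ) ≤ 3 * Real.log x := by
    have := Nat.ceil_lt_add_one (a := 2 * Real.log x) (by linarith)
    linarith
  have hxN : x ≤ (2 : ℝ) ^ N := by
    rw [← Real.log_le_log_iff (by linarith) (by positivity), Real.log_pow]
    nlinarith [Real.log_two_gt_d9]
  have h3 : LL x ≤ 1 + C * (1 + Real.log N) := by
    refine (LL_mono hxN).trans ((h N).trans ?_)
    gcongr
    exact harmonic_le_one_add_log N
  have h4 : Real.log N ≤ Real.log 3 + Real.log (Real.log x) := by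
    rw [← Real.log_mul (by norm_num) (by linarith)]
    exact Real.log_le_log (by linarith) hN2
  have h5 : Real.log 3 ≤ 2 := by linarith [Real.log_le_sub_one_of_pos (show (0:ℝ) < 3 by norm_num)]
  nlinarith

lemma biquad_sqrt (a b : ℤ) :
    (∃ s ∈ biquad a b, s ^ 2 = (a : ℂ)) ∧ (∃ s ∈ biquad a b, s ^ 2 = (b : ℂ)) := by
  constructor
  · obtain ⟨z, hz⟩ := IsAlgClosed.exists_pow_nat_eq (a : ℂ) (n := 2) (by norm_num)
    exact ⟨z, IntermediateField.subset_adjoin _ _ (Or.inl hz), hz⟩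
  · obtain ⟨z, hz⟩ := IsAlgClosed.exists_pow_nat_eq (b : ℂ) (n := 2) (by norm_num)
    exact ⟨z, IntermediateField.subset_adjoin _ _ (Or.inr hz), hz⟩

lemma sq_dvd_absDisc (K : IntermediateField ℚ ℂ) (hK : Module.finrank ℚ K = 4) (a : ℤ)
    (ha : Squarefree a) (hs : ∃ s ∈ K, s ^ 2 = (a : ℂ)) (p : ℕ) (hp : p.Prime)
    (hpa : (p : ℤ) ∣ a) : p ^ 2 ∣ absDisc K := by
  have hfd : FiniteDimensional ℚ K := Module.finite_of_finrank_pos (by omega)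
  have : NumberField K := ⟨⟩
  rw [absDisc, dif_pos hfd]
  obtain ⟨s, hsK, hs⟩ := hs
  have hs' : (⟨s, hsK⟩ : K) ^ 2 = (a : K) := by
    apply Subtype.ext
    push_cast
    exact hs
  have hint : IsIntegral ℤ (⟨s, hsK⟩ : K) := by
    apply IsIntegral.of_pow (n := 2) (by norm_num)
    rw [hs']
    exact isIntegral_intCast a
  obtain ⟨t, ht⟩ : ∃ t : 𝓞 K, algebraMap (𝓞 K) K t = ⟨s, hsK⟩ := ⟨⟨_, hint⟩, rfl⟩
  refine sq_dvd_discr K hK t a ?_ ha p hp hpa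
  apply FaithfulSMul.algebraMap_injective (𝓞 K) K
  rw [map_pow, map_intCast, ht, hs']

/-- integers `± ∏ A` with `A ⊆ S`. -/
def DD (S : Finset ℕ) : Finset ℤ :=
  (S.powerset ×ˢ ({1, -1} : Finset ℤ)).image (fun q => q.2 * ((∏ p ∈ q.1, p : ℕ) : ℤ))

lemma card_DD (S : Finset ℕ) : (DD S).card ≤ 2 ^ S.card * 2 := by
  unfold DD
  refine Finset.card_image_le.trans ?_
  rw [Finset.card_product, Finset.card_powerset]
  exact Nat.mul_le_mul_left _ Finset.card_le_two

lemma mem_DD (S : Finset ℕ) (a : ℤ) (ha : Squarefree a) (h : a.natAbs.primeFactors ⊆ S) :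
    a ∈ DD S := by
  unfold DD
  rw [Finset.mem_image]
  have h1 : ∏ p ∈ a.natAbs.primeFactors, p = a.natAbs :=
    Nat.prod_primeFactors_of_squarefree (Int.squarefree_natAbs.mpr ha)
  rcases Int.natAbs_eq a with h2 | h2
  · exact ⟨(a.natAbs.primeFactors, 1), by simpa using h, by simp only [h1]; omega⟩
  · exact ⟨(a.natAbs.primeFactors, -1), by simpa using h, by simp only [h1]; omega⟩

def GG (k : ℕ) (x : ℝ) : Finset (IntermediateField ℚ ℂ) :=
  (FF k x).biUnion (fun S => (DD S ×ˢ DD S).image (fun q => biquad q.1 q.2))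

lemma card_GG (k : ℕ) (x : ℝ) : (GG k x).card ≤ (FF k x).card * (2 ^ k * 2) ^ 2 := by
  unfold GG
  refine Finset.card_biUnion_le_card_mul _ _ _ fun S hS => ?_
  refine Finset.card_image_le.trans ?_
  have h1 : (DD S).card ≤ 2 ^ k * 2 := (card_DD S).trans
    (Nat.mul_le_mul_right _ (Nat.pow_le_pow_right (by norm_num) (mem_FF.mp hS).2.1))
  rw [Finset.card_product, pow_two]
  exact Nat.mul_le_mul h1 h1

lemma mem_GG (n : ℕ) (X : ℝ) (K : IntermediateField ℚ ℂ) (hK : K ∈ biquadFamily)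
    (hw : (absDisc K).primeFactors.card = n + 2) (hX : (absDisc K : ℝ) ≤ X) :
    K ∈ GG (n + 2) √X := by
  obtain ⟨a, b, -, -, ha, hb, h4, hKab⟩ := hK
  have hD : absDisc K ≠ 0 := by
    intro h
    rw [h] at hw
    simp at hw
  obtain ⟨sa, sb⟩ := biquad_sqrt a b
  rw [← hKab] at sa sb
  set S := a.natAbs.primeFactors ∪ b.natAbs.primeFactors with hS
  have hprime : ∀ p ∈ S, p.Prime := by
    intro p hp
    rcases Finset.mem_union.mp hp with h | h <;> exact Nat.prime_of_mem_primeFactors h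
  have hdvd : ∀ p ∈ S, p ^ 2 ∣ absDisc K := by
    intro p hp
    rcases Finset.mem_union.mp hp with h | h
    · exact sq_dvd_absDisc K h4 a ha sa p (hprime p hp)
        (Int.natCast_dvd.mpr (Nat.dvd_of_mem_primeFactors h))
    · exact sq_dvd_absDisc K h4 b hb sb p (hprime p hp)
        (Int.natCast_dvd.mpr (Nat.dvd_of_mem_primeFactors h))
  have hprod : (∏ p ∈ S, p) ^ 2 ∣ absDisc K := by
    rw [← Finset.prod_pow]
    refine Finset.prod_dvd_of_isRelPrime (fun p hp q hq hpq => ?_) hdvd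
    exact Nat.coprime_iff_isRelPrime.mp (Nat.Coprime.pow 2 2
      ((Nat.coprime_primes (hprime p hp) (hprime q hq)).mpr hpq))
  have hle : ((∏ p ∈ S, p : ℕ) : ℝ) ≤ √X := by
    apply Real.le_sqrt_of_sq_le
    refine le_trans ?_ hX
    exact_mod_cast Nat.le_of_dvd (Nat.pos_of_ne_zero hD) hprod
  have hcard : S.card ≤ n + 2 := by
    rw [← hw]
    refine Finset.card_le_card fun p hp => ?_
    exact Nat.mem_primeFactors.mpr
      ⟨hprime p hp, (dvd_pow_self p two_ne_zero).trans (hdvd p hp), hD⟩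
  unfold GG
  rw [Finset.mem_biUnion]
  refine ⟨S, mem_FF.mpr ⟨hprime, hcard, hle⟩, ?_⟩
  rw [Finset.mem_image]
  exact ⟨(a, b), Finset.mem_product.mpr ⟨mem_DD S a ha Finset.subset_union_left,
    mem_DD S b hb Finset.subset_union_right⟩, hKab.symm⟩

lemma countSn_le (n : ℕ) (X : ℝ) :
    countSn n X ≤ (FF (n + 2) √X).card * (2 ^ (n + 2) * 2) ^ 2 := by
  refine le_trans ?_ (card_GG (n + 2) √X)
  unfold countSn
  rw [← Fintype.card_coe, ← Nat.card_eq_fintype_card]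
  exact Nat.card_le_card_of_injective
    (fun K => (⟨K.1, mem_GG n X K.1 K.2.1 K.2.2.1 K.2.2.2⟩ : GG (n + 2) √X))
    (fun K K' h => Subtype.ext (congrArg (fun z => z.1) h))

theorem stmt17 (n : ℕ) (hn : 1 ≤ n) :
    ∃ C : ℝ, ∀ᶠ X : ℝ in atTop,
      (countSn n X : ℝ) ≤
        C * (Real.sqrt X / Real.log X) * Real.log (Real.log X) ^ (n + 1) := by
  obtain ⟨C, hC, hF⟩ := FF_bound (n + 1)
  obtain ⟨A, hA, hL⟩ := LL_bound
  set M : ℝ := (2 ^ (n + 2) * 2) ^ 2 with hM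
  refine ⟨C * 2 * A ^ (n + 1) * M, ?_⟩
  filter_upwards [hL, eventually_gt_atTop 1] with X hX hX1
  have hX0 : 0 < X := by linarith
  have hl : 0 < Real.log X := Real.log_pos hX1
  have hs1 : 1 < √X := by rw [Real.lt_sqrt] <;> linarith
  have hsX : √X ≤ X := by
    have := Real.mul_self_sqrt hX0.le
    nlinarith
  have h1 : (countSn n X : ℝ) ≤ (FF (n + 2) √X).card * M := by
    rw [hM]
    exact_mod_cast countSn_le n X
  have h2 := hF √X hs1
  rw [Real.log_sqrt hX0.le] at h2
  have h3 : LL √X ≤ A * Real.log (Real.log X) := (LL_mono hsX).trans hX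
  have h0 : 0 ≤ LL √X := by linarith [one_le_LL √X]
  calc (countSn n X : ℝ) ≤ (FF (n + 2) √X).card * M := h1
    _ ≤ (C * (√X / (Real.log X / 2)) * LL √X ^ (n + 1)) * M := by
        gcongr
    _ ≤ (C * (√X / (Real.log X / 2)) * (A * Real.log (Real.log X)) ^ (n + 1)) * M := by
        gcongr
    _ = _ := by
        rw [mul_pow]
        field_simp
end
end
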